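/- Let G, A₁, …, A_m : [0,T] → Mₙ(ℂ) be continuous, let U be the propagator of G (U(0) = I, U'(t) = G(t)·U(t), U(t) invertible for every t), and for 1 ≤ i ≤ j ≤ m define the Dyson term 𝒟_U(A_i,…,A_j)(t) = U(t)·∫₀ᵗ dt₁ ∫₀^{t₁} dt₂ ⋯ ∫₀^{t_{j−i}} dt_{j−i+1} Ã_i(t₁)·Ã_{i+1}(t₂) ⋯ Ã_j(t_{j−i+1}), where Ã_k(s) = U(s)⁻¹·A_k(s)·U(s). Let L : [0,T] → M_{(m+1)n}(ℂ) be the block matrix whose (m+1)×(m+1) blocks are: all diagonal blocks equal to G(t), the k-th block on the first superdiagonal equal to A_k(t) for 1 ≤ k ≤ m, and all other blocks zero. Then the unique V : [0,T] → M_{(m+1)n}(ℂ) with V(0) = I and V'(t) = L(t)·V(t) is block upper triangular with all diagonal blocks equal to U(t) and, for 1 ≤ i < j ≤ m+1, with (i,j) block equal to 𝒟_U(A_i, A_{i+1}, …, A_{j−1})(t). -/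

import Mathlib

/-!
Reading `V' = L V` block by block, row `i` of `V` solves the inhomogeneous linear equation
`W' = G W + F` in which `F` is `A (i + 1)` times row `i + 1` (and `F = 0` in the last row).
Variation of constants, i.e. integrating `(U⁻¹ W)' = U⁻¹ F`, turns this into a recursion that
determines the rows from the last one upwards. The Dyson terms satisfy the same recursion, because
the outermost integration of an iterated integral peels off the first factor of its integrand.
-/

open MeasureTheory Set intervalIntegral

attribute [local instance] Matrix.linftyOpNormedAddCommGroup Matrix.linftyOpNormedRing
  Matrix.linftyOpNormedAlgebra

/-- The iterated (time-ordered simplex) integral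
`nestedInt [M₁, …, M_k] t = ∫₀ᵗ dt₁ M₁(t₁) ∫₀^{t₁} dt₂ M₂(t₂) ⋯ ∫₀^{t_{k-1}} dt_k M_k(t_k)`.
In particular, the Dyson term `𝒟_U(A_i, …, A_j)(t)` is
`U t * nestedInt [Ã_i, …, Ã_j] t` where `Ã_k s = (U s)⁻¹ * A_k s * U s`. -/
noncomputable def nestedInt {n : ℕ} :
    List (ℝ → Matrix (Fin n) (Fin n) ℂ) → ℝ → Matrix (Fin n) (Fin n) ℂ
  | [] => fun _ => 1
  | M :: Ms => fun t => ∫ τ in (0 : ℝ)..t, M τ * nestedInt Ms τ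

open scoped Ring

section VariationOfConstants

variable {R : Type*} [NormedRing R]

theorem continuousOn_ringInverse [HasSummableGeomSeries R] {X : Type*} [TopologicalSpace X]
    {S : Set X} {U : X → R} (hU : ContinuousOn U S) (hUinv : ∀ x ∈ S, IsUnit (U x)) :
    ContinuousOn (fun x => (U x)⁻¹ʳ) S := by
  intro x hx
  obtain ⟨u, hu⟩ := hUinv x hx
  exact (hu ▸ NormedRing.inverse_continuousAt u).comp_continuousWithinAt (hU x hx)

theorem hasDerivWithinAt_ringInverse_mul {𝕜 : Type*} [NontriviallyNormedField 𝕜] [NormedAlgebra 𝕜 R]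
    [HasSummableGeomSeries R] {U W : 𝕜 → R} {g f : R} {S : Set 𝕜} {t : 𝕜}
    (hU : HasDerivWithinAt U (g * U t) S t) (hUt : IsUnit (U t))
    (hW : HasDerivWithinAt W (g * W t + f) S t) :
    HasDerivWithinAt (fun s => (U s)⁻¹ʳ * W s) ((U t)⁻¹ʳ * f) S t := by
  obtain ⟨u, hu⟩ := hUt
  have hinv := hasFDerivAt_ringInverse (𝕜 := 𝕜) u
  rw [hu] at hinv
  refine ((hinv.comp_hasDerivWithinAt t hU).mul hW).congr_deriv ?_
  simp [← hu, mul_add, mul_assoc]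

theorem variation_of_constants [NormedAlgebra ℝ R] [CompleteSpace R] {a b : ℝ}
    {G U W F : ℝ → R}
    (hU : ∀ t ∈ Icc a b, HasDerivWithinAt U (G t * U t) (Icc a b) t)
    (hUinv : ∀ t ∈ Icc a b, IsUnit (U t))
    (hW : ∀ t ∈ Icc a b, HasDerivWithinAt W (G t * W t + F t) (Icc a b) t)
    (hF : IntervalIntegrable F volume a b) {t : ℝ} (ht : t ∈ Icc a b) :
    W t = U t * ((U a)⁻¹ʳ * W a + ∫ s in a..t, (U s)⁻¹ʳ * F s) := by
  have hsub : Icc a t ⊆ Icc a b := Icc_subset_Icc_right ht.2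
  have hderiv := fun s hs => hasDerivWithinAt_ringInverse_mul (hU s hs) (hUinv s hs) (hW s hs)
  have hUcont : ContinuousOn U (Icc a b) := HasDerivWithinAt.continuousOn hU
  have hint : IntervalIntegrable (fun s => (U s)⁻¹ʳ * F s) volume a t := by
    refine (hF.mono_set ?_).continuousOn_mul ?_
    · rwa [uIcc_of_le ht.1, uIcc_of_le (ht.1.trans ht.2)]
    · rw [uIcc_of_le ht.1]
      exact (continuousOn_ringInverse hUcont hUinv).mono hsub
  have hftc : ∫ s in a..t, (U s)⁻¹ʳ * F s = (U t)⁻¹ʳ * W t - (U a)⁻¹ʳ * W a :=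
    integral_eq_sub_of_hasDerivAt_of_le ht.1
      ((HasDerivWithinAt.continuousOn hderiv).mono hsub)
      (fun s hs => (hderiv s (hsub (Ioo_subset_Icc_self hs))).hasDerivAt
        (Icc_mem_nhds hs.1 (hs.2.trans_le ht.2)))
      hint
  rw [hftc, add_sub_cancel, Ring.mul_inverse_cancel_left _ _ (hUinv t ht)]

end VariationOfConstants

section DysonTerm

variable {R : Type*} [NormedRing R] [NormedAlgebra ℝ R]

/-- The iterated integral `∫ₐᵗ dt₁ M₁(t₁) ∫ₐ^{t₁} dt₂ M₂(t₂) ⋯` of a list `[M₁, M₂, …]` of functions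
with values in a normed algebra: `nestedInt` with an arbitrary base point `a`. -/
noncomputable def iteratedIntegral (a : ℝ) : List (ℝ → R) → ℝ → R
  | [] => fun _ => 1
  | M :: Ms => fun t => ∫ s in a..t, M s * iteratedIntegral a Ms s

theorem nestedInt_eq_iteratedIntegral {n : ℕ} (Ms : List (ℝ → Matrix (Fin n) (Fin n) ℂ)) :
    nestedInt Ms = iteratedIntegral 0 Ms := by
  induction Ms with
  | nil => rfl
  | cons M Ms ih => simp only [nestedInt, iteratedIntegral, ih]

/-- The Dyson term `𝒟_U(A₁, …, A_k)` based at `a`, with `U⁻¹` encoded as `Ring.inverse U`. The empty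
list gives `U` itself, so that the diagonal blocks are Dyson terms too. -/
noncomputable def dysonTerm (a : ℝ) (U : ℝ → R) (As : List (ℝ → R)) (t : ℝ) : R :=
  U t * iteratedIntegral a (As.map fun A s => (U s)⁻¹ʳ * A s * U s) t

theorem dysonTerm_nil (a : ℝ) (U : ℝ → R) : dysonTerm a U [] = U :=
  funext fun t => mul_one (U t)

theorem dysonTerm_cons (a : ℝ) (U A : ℝ → R) (As : List (ℝ → R)) (t : ℝ) :
    dysonTerm a U (A :: As) t = U t * ∫ s in a..t, (U s)⁻¹ʳ * (A s * dysonTerm a U As s) := by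
  simp only [dysonTerm, List.map_cons, iteratedIntegral, mul_assoc]

/-- The zero-indexed `(i, j)` block of the fundamental solution: the Dyson term of
`A (i + 1), …, A j` on and above the diagonal, and zero below it. -/
noncomputable def dysonBlock (a : ℝ) (U : ℝ → R) (A : ℕ → ℝ → R) (i j : ℕ) : ℝ → R :=
  if j < i then 0 else dysonTerm a U ((List.range' (i + 1) (j - i)).map A)

theorem dysonBlock_of_gt (a : ℝ) (U : ℝ → R) (A : ℕ → ℝ → R) {i j : ℕ} (hji : j < i) :
    dysonBlock a U A i j = 0 :=
  if_pos hji

theorem dysonBlock_of_le (a : ℝ) (U : ℝ → R) (A : ℕ → ℝ → R) {i j : ℕ} (hij : i ≤ j) :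
    dysonBlock a U A i j = dysonTerm a U ((List.range' (i + 1) (j - i)).map A) :=
  if_neg hij.not_gt

theorem dysonBlock_self (a : ℝ) (U : ℝ → R) (A : ℕ → ℝ → R) (i : ℕ) :
    dysonBlock a U A i i = U := by
  rw [dysonBlock_of_le a U A le_rfl, Nat.sub_self, List.range'_zero, List.map_nil, dysonTerm_nil]

theorem dysonBlock_eq_mul_add_integral (a : ℝ) (U : ℝ → R) (A : ℕ → ℝ → R) (i j : ℕ) (t : ℝ) :
    dysonBlock a U A i j t = U t * ((if i = j then 1 else 0) +
      ∫ s in a..t, (U s)⁻¹ʳ * (A (i + 1) s * dysonBlock a U A (i + 1) j s)) := by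
  rcases lt_trichotomy i j with hij | rfl | hji
  · have hlen : j - i = (j - (i + 1)) + 1 := by lia
    rw [dysonBlock_of_le a U A hij.le, dysonBlock_of_le a U A (Nat.succ_le_of_lt hij), hlen,
      List.range'_succ, List.map_cons, dysonTerm_cons, if_neg hij.ne, zero_add]
  · simp [dysonBlock_self, dysonBlock_of_gt a U A (Nat.lt_succ_self i)]
  · simp [dysonBlock_of_gt a U A hji, dysonBlock_of_gt a U A (hji.trans (Nat.lt_succ_self i)),
      hji.ne']

theorem eq_dysonBlock_iff {a : ℝ} {U : ℝ → R} {A : ℕ → ℝ → R} {i j : ℕ} {t : ℝ} {x : R} :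
    x = dysonBlock a U A i j t ↔
      (j < i → x = 0) ∧ (i = j → x = U t) ∧
      (i < j → x = dysonTerm a U ((List.range' (i + 1) (j - i)).map A) t) := by
  rcases lt_trichotomy i j with hij | rfl | hji
  · simp [dysonBlock_of_le a U A hij.le, hij, hij.ne, hij.not_gt]
  · simp [dysonBlock_self]
  · simp [dysonBlock_of_gt a U A hji, hji, hji.ne', hji.not_gt]

end DysonTerm

section UpperBidiagonal

/-- The matrix of the generator `L`: every diagonal entry is `x`, and the first superdiagonal is
`y 1, …, y m`, so that the zero-indexed entry `(i, i + 1)` is `y (i + 1)`. -/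
def upperBidiagonal {R : Type*} [Zero R] (m : ℕ) (x : R) (y : ℕ → R) :
    Matrix (Fin (m + 1)) (Fin (m + 1)) R :=
  Matrix.of fun i j => if i = j then x else if (j : ℕ) = i + 1 then y (i + 1) else 0

theorem comp_symm_eq_upperBidiagonal {R K : Type*} [Zero R] {m : ℕ}
    {x : Matrix K K R} {y : ℕ → Matrix K K R}
    {L : Matrix (Fin (m + 1) × K) (Fin (m + 1) × K) R}
    (hL : ∀ i j k l, L (i, k) (j, l) =
      if i = j then x k l else if (j : ℕ) = i + 1 then y (i + 1) k l else 0) :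
    (Matrix.comp _ _ _ _ R).symm L = upperBidiagonal m x y := by
  ext i j k l
  rw [Matrix.comp_symm_apply, hL, upperBidiagonal, Matrix.of_apply]
  split_ifs <;> rfl

variable {R : Type*} [NonUnitalNonAssocSemiring R] {m : ℕ}

theorem upperBidiagonal_mul_apply_castSucc (x : R) (y : ℕ → R)
    (M : Matrix (Fin (m + 1)) (Fin (m + 1)) R) (i : Fin m) (j : Fin (m + 1)) :
    (upperBidiagonal m x y * M) i.castSucc j = x * M i.castSucc j + y (i + 1) * M i.succ j := by
  rw [Matrix.mul_apply, Fintype.sum_eq_add i.castSucc i.succ (Fin.castSucc_lt_succ).ne]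
  · simp [upperBidiagonal, (Fin.castSucc_lt_succ (i := i)).ne]
  · rintro k ⟨hdiag, hsuper⟩
    have hk : (k : ℕ) ≠ i + 1 := fun h => hsuper (Fin.ext h)
    simp [upperBidiagonal, hdiag.symm, hk]

theorem upperBidiagonal_mul_apply_last (x : R) (y : ℕ → R)
    (M : Matrix (Fin (m + 1)) (Fin (m + 1)) R) (j : Fin (m + 1)) :
    (upperBidiagonal m x y * M) (Fin.last m) j = x * M (Fin.last m) j := by
  rw [Matrix.mul_apply, Fintype.sum_eq_single (Fin.last m)]
  · simp [upperBidiagonal]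
  · intro k hk
    simp [upperBidiagonal, hk.symm, k.isLt.ne]

end UpperBidiagonal

section MatrixDerivative

variable {𝕜 E : Type*} [NontriviallyNormedField 𝕜] [NormedAddCommGroup E] [NormedSpace 𝕜 E]
  {S : Set 𝕜} {t : 𝕜}

theorem hasDerivWithinAt_matrix {I J : Type*} [Finite I] [Finite J] {V : 𝕜 → Matrix I J E}
    {V' : Matrix I J E} :
    HasDerivWithinAt V V' S t ↔ ∀ i j, HasDerivWithinAt (fun s => V s i j) (V' i j) S t := by
  cases nonempty_fintype I
  cases nonempty_fintype J
  exact hasDerivWithinAt_pi.trans <| forall_congr' fun _ => hasDerivWithinAt_pi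

theorem hasDerivWithinAt_comp_symm {I J K L : Type*} [Finite I] [Finite J] [Finite K] [Finite L]
    {V : 𝕜 → Matrix (I × K) (J × L) E} {V' : Matrix (I × K) (J × L) E}
    (hV : HasDerivWithinAt V V' S t) :
    HasDerivWithinAt (fun s => (Matrix.comp I J K L E).symm (V s))
      ((Matrix.comp I J K L E).symm V') S t := by
  cases nonempty_fintype K
  cases nonempty_fintype L
  -- The norm only serves to apply `hasDerivWithinAt_pi`: it induces the product topology.
  let _ : NormedSpace 𝕜 (Matrix K L E) := Matrix.linftyOpNormedSpace
  exact hasDerivWithinAt_matrix.2 fun i j => hasDerivWithinAt_matrix.2 fun k l =>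
    hasDerivWithinAt_matrix.1 hV (i, k) (j, l)

end MatrixDerivative

theorem statement12_general {R : Type*} [NormedRing R] [NormedAlgebra ℝ R] [CompleteSpace R]
    {m : ℕ} {a b : ℝ} {G U : ℝ → R} {A : ℕ → ℝ → R}
    {V : ℝ → Matrix (Fin (m + 1)) (Fin (m + 1)) R}
    (hA : ∀ k ∈ Icc 1 m, IntervalIntegrable (A k) volume a b)
    (hUa : U a = 1)
    (hU : ∀ t ∈ Icc a b, HasDerivWithinAt U (G t * U t) (Icc a b) t)
    (hUinv : ∀ t ∈ Icc a b, IsUnit (U t))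
    (hVa : V a = 1)
    (hV : ∀ t ∈ Icc a b,
      HasDerivWithinAt V (upperBidiagonal m (G t) (fun k => A k t) * V t) (Icc a b) t)
    (i j : Fin (m + 1)) : ∀ t ∈ Icc a b, V t i j = dysonBlock a U A i j t := by
  have hVij := fun t ht => hasDerivWithinAt_matrix.1 (hV t ht)
  induction i using Fin.reverseInduction with
  | last =>
    intro t ht
    have hrow : ∀ s ∈ Icc a b, HasDerivWithinAt (fun s => V s (Fin.last m) j)
        (G s * V s (Fin.last m) j + 0) (Icc a b) s := fun s hs =>
      (hVij s hs _ j).congr_deriv (by rw [upperBidiagonal_mul_apply_last, add_zero])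
    rw [variation_of_constants hU hUinv hrow intervalIntegrable_const ht]
    rcases (Fin.le_last j).eq_or_lt with rfl | hj
    · simp [hUa, hVa, dysonBlock_self]
    · rw [dysonBlock_of_gt a U A (Fin.lt_def.1 hj)]
      simp [hVa, hj.ne']
  | cast i ih =>
    intro t ht
    have hrow : ∀ s ∈ Icc a b, HasDerivWithinAt (fun s => V s i.castSucc j)
        (G s * V s i.castSucc j + A (i + 1) s * V s i.succ j) (Icc a b) s := fun s hs =>
      (hVij s hs _ j).congr_deriv (upperBidiagonal_mul_apply_castSucc _ _ _ _ _)
    have hnext : ContinuousOn (fun s => V s i.succ j) (uIcc a b) := by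
      rw [uIcc_of_le (ht.1.trans ht.2)]
      exact HasDerivWithinAt.continuousOn fun s hs => hVij s hs i.succ j
    have hforcing := (hA (i + 1) ⟨by lia, i.isLt⟩).mul_continuousOn hnext
    rw [variation_of_constants hU hUinv hrow hforcing ht, dysonBlock_eq_mul_add_integral]
    congr 2
    · simp [hUa, hVa, Matrix.one_apply, Fin.ext_iff]
    · refine integral_congr fun s hs => ?_
      rw [uIcc_of_le ht.1] at hs
      simp only [ih s ⟨hs.1, hs.2.trans ht.2⟩, Fin.val_succ, Fin.val_castSucc]

/-- the `f = 1` construction. Let `U` be the propagator of `G` and let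
`L` be the `(m+1) × (m+1)`-block generator with every diagonal block `G t` and `k`-th
first-superdiagonal block `A k t` (`k = 1, …, m`, so the 0-indexed block `(i, i+1)` is
`A (i+1)`). If `V` solves `V' = L V`, `V 0 = 1`, then `V` is block upper triangular, each
diagonal block equals `U t`, and for `i < j` the `(i,j)` block is the Dyson term
`𝒟_U(A_{i+1}, …, A_j)(t)` (0-indexed blocks). -/
theorem statement12 {n m : ℕ} {T : ℝ} (hT : 0 < T)
    (G : ℝ → Matrix (Fin n) (Fin n) ℂ) (A : ℕ → ℝ → Matrix (Fin n) (Fin n) ℂ)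
    (U : ℝ → Matrix (Fin n) (Fin n) ℂ)
    (hG : ContinuousOn G (Icc 0 T))
    (hA : ∀ k, 1 ≤ k → k ≤ m → ContinuousOn (A k) (Icc 0 T))
    (hU0 : U 0 = 1)
    (hU : ∀ t ∈ Icc (0 : ℝ) T, HasDerivWithinAt U (G t * U t) (Icc 0 T) t)
    (hUinv : ∀ t ∈ Icc (0 : ℝ) T, IsUnit (U t))
    (L V : ℝ → Matrix (Fin (m + 1) × Fin n) (Fin (m + 1) × Fin n) ℂ)
    (hL : ∀ (t : ℝ) (i j : Fin (m + 1)) (a b : Fin n),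
      L t (i, a) (j, b) =
        if i = j then G t a b
        else if (j : ℕ) = (i : ℕ) + 1 then A ((i : ℕ) + 1) t a b
        else 0)
    (hV0 : V 0 = 1)
    (hV : ∀ t ∈ Icc (0 : ℝ) T, HasDerivWithinAt V (L t * V t) (Icc 0 T) t) :
    ∀ t ∈ Icc (0 : ℝ) T, ∀ i j : Fin (m + 1),
      (j < i → (Matrix.of fun a b => V t (i, a) (j, b)) = 0) ∧
      (i = j → (Matrix.of fun a b => V t (i, a) (j, b)) = U t) ∧
      (i < j → (Matrix.of fun a b => V t (i, a) (j, b)) =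
        U t * nestedInt
          ((List.range' ((i : ℕ) + 1) ((j : ℕ) - (i : ℕ))).map
            fun k => fun τ => (U τ)⁻¹ * A k τ * U τ) t) := by
  let blocks := (Matrix.compRingEquiv (Fin (m + 1)) (Fin n) ℂ).symm
  have hVblocks : ∀ t ∈ Icc 0 T, HasDerivWithinAt (fun s => blocks (V s))
      (upperBidiagonal m (G t) (fun k => A k t) * blocks (V t)) (Icc 0 T) t := by
    intro t ht
    rw [← comp_symm_eq_upperBidiagonal (hL t)]
    exact (hasDerivWithinAt_comp_symm (hV t ht)).congr_deriv (map_mul blocks _ _)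
  intro t ht i j
  have hblock : (Matrix.of fun a b => V t (i, a) (j, b)) = dysonBlock 0 U A i j t :=
    statement12_general (fun k hk => (hA k hk.1 hk.2).intervalIntegrable_of_Icc hT.le)
      hU0 hU hUinv (by rw [hV0, map_one]) hVblocks i j t ht
  simpa only [dysonTerm, ← nestedInt_eq_iteratedIntegral, List.map_map, Function.comp_def,
    Fin.val_fin_lt, Fin.val_inj, ← Matrix.nonsing_inv_eq_ringInverse]
    using eq_dysonBlock_iff.1 hblock
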